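/- If C is a co-Boolean category, then every object of C is projection-coextensive. -/

import Mathlib

open CategoryTheory CategoryTheory.Limits

universe v u

variable {C : Type u} [Category.{v} C]

/-- `(p, q)` is a binary product diagram, exhibiting `X` as the product of `A` and `B`. -/
def IsBinaryProduct {X A B : C} (p : X ⟶ A) (q : X ⟶ B) : Prop :=
  Nonempty (IsLimit (BinaryFan.mk p q))

/-- `p : X ⟶ A` is a product projection. -/
def IsProductProjection {X A : C} (p : X ⟶ A) : Prop :=
  ∃ (B : C) (q : X ⟶ B), IsBinaryProduct p q

/-- A pushout square whose two legs belong to the class `M`. -/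
def IsMPushout (M : MorphismProperty C) {Z A B P : C}
    (f : Z ⟶ A) (g : Z ⟶ B) (a : A ⟶ P) (b : B ⟶ P) : Prop :=
  IsPushout f g a b ∧ M a ∧ M b

/-- `X` is an `M`-coextensive object. -/
structure MCoextensive (M : MorphismProperty C) (X : C) : Prop where
  pushout_exists : ∀ ⦃Y A : C⦄ (m : X ⟶ Y) (p : X ⟶ A), M m → IsProductProjection p →
    ∃ (P : C) (a : A ⟶ P) (b : Y ⟶ P), IsMPushout M p m a b
  isBinaryProduct_iff : ∀ ⦃A₁ A₂ Y B₁ B₂ : C⦄ (π₁ : X ⟶ A₁) (π₂ : X ⟶ A₂)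
    (f : X ⟶ Y) (p₁ : A₁ ⟶ B₁) (p₂ : A₂ ⟶ B₂) (π₁' : Y ⟶ B₁) (π₂' : Y ⟶ B₂),
    IsBinaryProduct π₁ π₂ → M f → M p₁ → M p₂ →
    π₁ ≫ p₁ = f ≫ π₁' → π₂ ≫ p₂ = f ≫ π₂' →
    (IsBinaryProduct π₁' π₂' ↔ (IsMPushout M π₁ f p₁ π₁' ∧ IsMPushout M π₂ f p₂ π₂'))

/-- The class of product projections. -/
def projections (C : Type u) [Category.{v} C] : MorphismProperty C :=
  fun _ _ f => IsProductProjection f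

/-- `X` is projection-coextensive. -/
def ProjectionCoextensive (X : C) : Prop := MCoextensive (projections C) X

/-- `f` is a regular epimorphism (a coequalizer of some parallel pair). -/
def IsRegularEpimorphism {X Y : C} (f : X ⟶ Y) : Prop :=
  ∃ (W : C) (a b : W ⟶ X) (h : a ≫ f = b ≫ f), Nonempty (IsColimit (Cofork.ofπ f h))

/-- The class of regular epimorphisms. -/
def regularEpis (C : Type u) [Category.{v} C] : MorphismProperty C :=
  fun _ _ f => IsRegularEpimorphism f

/-- `X` is regularly-coextensive. -/
def RegularlyCoextensive (X : C) : Prop := MCoextensive (regularEpis C) X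

/-- A regular category: finitely complete, coequalizers of kernel pairs, and
regular epimorphisms are stable under pullback. -/
class IsRegularCategory (C : Type u) [Category.{v} C] [HasFiniteLimits C] : Prop where
  hasCoequalizer_kernelPair : ∀ {X Y : C} (f : X ⟶ Y),
    HasCoequalizer (pullback.fst f f) (pullback.snd f f)
  regularEpi_stable : ∀ {X Y Z : C} (f : X ⟶ Y) (g : Z ⟶ Y),
    IsRegularEpimorphism f → IsRegularEpimorphism (pullback.snd f g)

/-- `X` has global support: the unique morphism to the terminal object is a regular epi. -/
def HasGlobalSupport [HasTerminal C] (X : C) : Prop :=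
  IsRegularEpimorphism (terminal.from X)

/-- A co-Boolean category: pushouts of product projections along arbitrary morphisms
exist and are product projections, product projections push out binary product
diagrams to binary product diagrams, and the only objects whose diagonal pair of
identities is a binary product diagram are the terminal ones. -/
structure CoBoolean (C : Type u) [Category.{v} C] [HasFiniteProducts C] : Prop where
  pushout_exists : ∀ ⦃X A Y : C⦄ (p : X ⟶ A) (f : X ⟶ Y), IsProductProjection p →
    ∃ (P : C) (a : A ⟶ P) (q : Y ⟶ P), IsPushout p f a q ∧ IsProductProjection q
  pushout_prod : ∀ ⦃X A₁ A₂ Y B₁ B₂ : C⦄ (π₁ : X ⟶ A₁) (π₂ : X ⟶ A₂) (f : X ⟶ Y)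
    (p₁ : A₁ ⟶ B₁) (p₂ : A₂ ⟶ B₂) (π₁' : Y ⟶ B₁) (π₂' : Y ⟶ B₂),
    IsBinaryProduct π₁ π₂ → IsProductProjection f →
    IsPushout π₁ f p₁ π₁' → IsPushout π₂ f p₂ π₂' → IsBinaryProduct π₁' π₂'
  terminal_of_diag : ∀ (X : C), IsBinaryProduct (𝟙 X) (𝟙 X) → Nonempty (IsTerminal X)


theorem IsBinaryProduct.symm' {X A B : C} {p : X ⟶ A} {q : X ⟶ B} (h : IsBinaryProduct p q) :
    IsBinaryProduct q p :=
  h.map BinaryFan.isLimitFlip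

theorem IsBinaryProduct.exists_lift {X A B : C} {p : X ⟶ A} {q : X ⟶ B} (h : IsBinaryProduct p q)
    {W : C} (f : W ⟶ A) (g : W ⟶ B) : ∃ k : W ⟶ X, k ≫ p = f ∧ k ≫ q = g := by
  obtain ⟨hl⟩ := h
  obtain ⟨k, h1, h2⟩ := BinaryFan.IsLimit.lift' hl f g
  exact ⟨k, h1, h2⟩

theorem IsBinaryProduct.ext' {X A B : C} {p : X ⟶ A} {q : X ⟶ B} (h : IsBinaryProduct p q)
    {W : C} {f g : W ⟶ X} (h1 : f ≫ p = g ≫ p) (h2 : f ≫ q = g ≫ q) : f = g := by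
  obtain ⟨hl⟩ := h
  exact BinaryFan.IsLimit.hom_ext hl h1 h2

/-- Pushout of an epimorphism `e` along `e ≫ q`. -/
theorem isPushout_epi_comp {X A B : C} (e : X ⟶ A) [Epi e] (q : A ⟶ B) :
    IsPushout (e ≫ q) e (𝟙 B) q := by
  refine ⟨⟨by simp⟩, ⟨PushoutCocone.IsColimit.mk _ (fun s => s.inl) ?_ ?_ ?_⟩⟩
  · intro s
    simp
  · intro s
    rw [← cancel_epi e, ← Category.assoc]
    exact s.condition
  · intro s m h1 _
    simpa using h1

theorem CoBoolean.epi {C : Type u} [Category.{v} C] [HasFiniteProducts C] (hC : CoBoolean C)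
    {X A B : C} {p : X ⟶ A} {q : X ⟶ B} (h : IsBinaryProduct p q) : Epi p := by
  have hp : IsProductProjection p := ⟨_, _, h⟩
  obtain ⟨P, a, b, hP, -⟩ := hC.pushout_exists p p hp
  obtain ⟨R, s, r, hR, -⟩ := hC.pushout_exists q p ⟨_, _, h.symm'⟩
  have hbr := hC.pushout_prod p q p a s b r h hp hP hR
  obtain ⟨n, hn1, hn2⟩ : ∃ n : P ⟶ A, a ≫ n = 𝟙 A ∧ b ≫ n = 𝟙 A :=
    ⟨hP.desc (𝟙 _) (𝟙 _) rfl, hP.inl_desc _ _ _, hP.inr_desc _ _ _⟩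
  obtain ⟨w, hw, -⟩ := hbr.exists_lift (𝟙 P) (n ≫ r)
  have hnw : n = w := by
    calc n = (w ≫ b) ≫ n := by rw [hw, Category.id_comp]
      _ = w := by rw [Category.assoc, hn2, Category.comp_id]
  have hab : a = b := by
    calc a = a ≫ (w ≫ b) := by rw [hw, Category.comp_id]
      _ = b := by rw [← hnw, ← Category.assoc, hn1, Category.id_comp]
  refine ⟨fun g k hgk => ?_⟩
  exact (hP.inl_desc g k hgk).symm.trans
    ((congrArg (fun z => z ≫ hP.desc g k hgk) hab).trans (hP.inr_desc g k hgk))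

theorem CoBoolean.terminal {C : Type u} [Category.{v} C] [HasFiniteProducts C] (hC : CoBoolean C)
    {X A B P : C} {p : X ⟶ A} {q : X ⟶ B} (h : IsBinaryProduct p q) {a : A ⟶ P} {b : B ⟶ P}
    (hP : IsPushout p q a b) : Nonempty (IsTerminal P) := by
  have := hC.epi h
  have h1 : IsPushout p p (𝟙 A) (𝟙 A) := by simpa using isPushout_epi_comp p (𝟙 A)
  have h2 : IsBinaryProduct (𝟙 A) a := hC.pushout_prod p q p _ _ _ _ h ⟨_, _, h⟩ h1 hP.flip
  have := hC.epi h2.symm'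
  have h3 : IsPushout a a (𝟙 P) (𝟙 P) := by simpa using isPushout_epi_comp a (𝟙 P)
  exact hC.terminal_of_diag P (hC.pushout_prod (𝟙 A) a a a (𝟙 P) (𝟙 P) (𝟙 P) h2
    ⟨_, _, h2.symm'⟩ (IsPushout.of_horiz_isIso ⟨by simp⟩) h3)

theorem CoBoolean.isIso {C : Type u} [Category.{v} C] [HasFiniteProducts C] (hC : CoBoolean C)
    {Y Q₁ Q₂ B₁ B₂ : C} {y₁ : Y ⟶ Q₁} {y₂ : Y ⟶ Q₂} (h : IsBinaryProduct y₁ y₂)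
    (q₁ : Q₁ ⟶ B₁) (q₂ : Q₂ ⟶ B₂) (h' : IsBinaryProduct (y₁ ≫ q₁) (y₂ ≫ q₂)) : IsIso q₁ := by
  have := hC.epi h
  obtain ⟨T, a, t, hT, -⟩ := hC.pushout_exists (y₂ ≫ q₂) y₁ ⟨_, _, h'.symm'⟩
  obtain ⟨R, r, s, hR, -⟩ := hC.pushout_exists y₁ y₂ ⟨_, _, h⟩
  obtain ⟨tR⟩ := hC.terminal h hR
  have hq : IsBinaryProduct q₁ t :=
    hC.pushout_prod _ _ y₁ _ _ _ _ h' ⟨_, _, h⟩ (isPushout_epi_comp y₁ q₁) hT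
  obtain ⟨d, hd⟩ : ∃ d : R ⟶ T, r ≫ d = t :=
    ⟨hR.desc t (q₂ ≫ a) (by rw [← hT.w, Category.assoc]), hR.inl_desc _ _ _⟩
  obtain ⟨k, hk1, hk2⟩ := hq.exists_lift (𝟙 B₁) (tR.from B₁ ≫ d)
  refine ⟨k, hq.ext' (by simp [hk1]) ?_, hk1⟩
  rw [Category.assoc, hk2, Category.id_comp, ← Category.assoc, ← hd]
  congr 1
  exact tR.hom_ext _ _

theorem CoBoolean.pushout_exists' {C : Type u} [Category.{v} C] [HasFiniteProducts C]
    (hC : CoBoolean C) {X Y A : C} (m : X ⟶ Y) (p : X ⟶ A) (hm : IsProductProjection m)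
    (hp : IsProductProjection p) :
    ∃ (P : C) (a : A ⟶ P) (b : Y ⟶ P), IsMPushout (projections C) p m a b := by
  obtain ⟨P, a, b, hP, hb⟩ := hC.pushout_exists p m hp
  obtain ⟨P', b', a', hP', B, c, hc⟩ := hC.pushout_exists m p hm
  refine ⟨P, a, b, hP, ⟨B, c, ?_⟩, hb⟩
  let e := hP'.flip.isoIsPushout _ _ hP
  have he : a' ≫ e.hom = a := IsPushout.inl_isoIsPushout_hom _ _ _ _
  obtain ⟨hl⟩ := hc
  refine ⟨?_⟩
  refine BinaryFan.IsLimit.mk _ (fun f g => (BinaryFan.IsLimit.lift' hl (f ≫ e.inv) g).1) ?_ ?_ ?_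
  · intro T f g
    have := (BinaryFan.IsLimit.lift' hl (f ≫ e.inv) g).2.1
    dsimp at this ⊢
    rw [← he, ← Category.assoc, this]
    simp
  · intro T f g
    exact (BinaryFan.IsLimit.lift' hl (f ≫ e.inv) g).2.2
  · intro T f g m h1 h2
    apply BinaryFan.IsLimit.hom_ext hl
    · rw [(BinaryFan.IsLimit.lift' hl (f ≫ e.inv) g).2.1, ← h1]
      simp [← he]
    · rw [(BinaryFan.IsLimit.lift' hl (f ≫ e.inv) g).2.2]
      exact h2

theorem isPushout_of_isIso_desc {X A Y P B : C} {p : X ⟶ A} {f : X ⟶ Y} {a : A ⟶ P} {b : Y ⟶ P}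
    (h : IsPushout p f a b) (q : P ⟶ B) [IsIso q] {a' : A ⟶ B} {b' : Y ⟶ B}
    (ha : a ≫ q = a') (hb : b ≫ q = b') : IsPushout p f a' b' :=
  h.of_iso (Iso.refl _) (Iso.refl _) (Iso.refl _) (asIso q) (by simp) (by simp)
    (by simp [ha]) (by simp [hb])

/-- Every object of a co-Boolean category is projection-coextensive. -/
theorem coBoolean_projectionCoextensive
    {C : Type u} [Category.{v} C] [HasFiniteProducts C]
    (hC : CoBoolean C) (X : C) : ProjectionCoextensive X := by
  refine ⟨fun Y A m p hm hp => hC.pushout_exists' m p hm hp, ?_⟩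
  intro A₁ A₂ Y B₁ B₂ π₁ π₂ f p₁ p₂ π₁' π₂' hπ hf hp₁ hp₂ w₁ w₂
  constructor
  · intro h
    obtain ⟨Q₁, a₁, y₁, hQ₁, -⟩ := hC.pushout_exists π₁ f ⟨_, _, hπ⟩
    obtain ⟨Q₂, a₂, y₂, hQ₂, -⟩ := hC.pushout_exists π₂ f ⟨_, _, hπ.symm'⟩
    have hy := hC.pushout_prod _ _ _ _ _ _ _ hπ hf hQ₁ hQ₂
    obtain ⟨q₁, ha₁, hb₁⟩ : ∃ q : Q₁ ⟶ B₁, a₁ ≫ q = p₁ ∧ y₁ ≫ q = π₁' :=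
      ⟨hQ₁.desc _ _ w₁, hQ₁.inl_desc _ _ _, hQ₁.inr_desc _ _ _⟩
    obtain ⟨q₂, ha₂, hb₂⟩ : ∃ q : Q₂ ⟶ B₂, a₂ ≫ q = p₂ ∧ y₂ ≫ q = π₂' :=
      ⟨hQ₂.desc _ _ w₂, hQ₂.inl_desc _ _ _, hQ₂.inr_desc _ _ _⟩
    have h' : IsBinaryProduct (y₁ ≫ q₁) (y₂ ≫ q₂) := by rw [hb₁, hb₂]; exact h
    have := hC.isIso hy q₁ q₂ h'
    have := hC.isIso hy.symm' q₂ q₁ h'.symm'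
    exact ⟨⟨isPushout_of_isIso_desc hQ₁ q₁ ha₁ hb₁, hp₁, ⟨_, _, h⟩⟩,
      ⟨isPushout_of_isIso_desc hQ₂ q₂ ha₂ hb₂, hp₂, ⟨_, _, h.symm'⟩⟩⟩
  · rintro ⟨h₁, h₂⟩
    exact hC.pushout_prod _ _ _ _ _ _ _ hπ hf h₁.1 h₂.1
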